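/- Let $\alpha_1,\alpha_2,\nu_1,\nu_2>0$, let $H_1,H_2\in(1/2,1)$ with $H:=H_1+H_2=3/2$, and let $\rho,\eta\in\mathbb{R}$. Define $r_{11}(s)=\nu_1^{2}\frac{\Gamma(2H_1+1)\sin(\pi H_1)}{2\pi}\int_{-\infty}^{\infty}\cos(sx)\frac{|x|^{1-2H_1}}{\alpha_1^{2}+x^{2}}dx$ and $r_{22}(s)=\nu_2^{2}\frac{\Gamma(2H_2+1)\sin(\pi H_2)}{2\pi}\int_{-\infty}^{\infty}\cos(sx)\frac{|x|^{1-2H_2}}{\alpha_2^{2}+x^{2}}dx$. Then $\lim_{s\to+\infty}s\,\big(r_{11}(s)\,r_{22}(s)+r_{12}(s)\,r_{21}(s)\big)=\frac{\nu_1^{2}\nu_2^{2}}{4\,\alpha_1^{2}\alpha_2^{2}}\Big(\frac{9}{16}\,(\rho^{2}-\eta^{2})+4\,H_1H_2(2H_1-1)(2H_2-1)\Big)$. -/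

import Mathlib

/-!
Each factor decays like a power of `s` with an explicit constant.

For the autocovariances, one integration by parts in the Fourier integral of
`|x| ^ (1 - p) / (α ^ 2 + x ^ 2)`, `p = 2 H`, followed by the scaling `y = s x`, shows that only the
value `α⁻²` of the Lorentzian at the origin matters and leaves the constant `∫ sin y * y ^ (-p)`.
Writing `Γ(p) y ^ (-p)` as a Laplace integral and exchanging the integrals reduces that constant to
`∫ t ^ (p - 1) / (1 + t ^ 2)`, and the same exchange applied to `exp (-y)` reduces the latter to
Euler's reflection formula.

For the cross-covariances, the inner integral is a Stieltjes transform of an exponential and behaves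
like `v ^ (H - 2) / α`. The outer integral convolves it with an exponential, which has enough
moments to preserve the power law, so it only multiplies the constant by the mass `1 / β`. The
lag-zero covariance is multiplied by an exponential and does not contribute.
-/

open MeasureTheory Filter Asymptotics Topology Real

open Set

/-! ### Mellin transforms of Laplace transforms -/

theorem integrableOn_rpow_mul_exp_neg_mul {q a : ℝ} (hq : -1 < q) (ha : 0 < a) :
    IntegrableOn (fun t ↦ t ^ q * rexp (-a * t)) (Ioi 0) := by
  simpa only [rpow_one] using integrableOn_rpow_mul_exp_neg_mul_rpow hq one_pos ha

theorem integral_exp_neg_mul {a : ℝ} (ha : 0 < a) :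
    ∫ t in Ioi (0 : ℝ), rexp (-a * t) = a⁻¹ := by
  rw [integral_exp_mul_Ioi (neg_neg_of_pos ha), mul_zero, exp_zero, neg_div_neg_eq, one_div]

theorem integral_rpow_mul_exp_neg_mul_eq_Gamma_mul_rpow_neg {p y : ℝ} (hp : 0 < p) (hy : 0 < y) :
    ∫ t in Ioi 0, t ^ (p - 1) * rexp (-(y * t)) = Gamma p * y ^ (-p) := by
  rw [integral_rpow_mul_exp_neg_mul_Ioi hp hy, one_div, inv_rpow hy.le, ← rpow_neg hy.le, mul_comm]

theorem integrable_mul_rpow_mul_exp_neg_prod {f : ℝ → ℝ} {p : ℝ} (hp : 0 < p)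
    (hf : IntegrableOn (fun y ↦ f y * y ^ (-p)) (Ioi 0)) :
    Integrable (Function.uncurry fun y t ↦ f y * (t ^ (p - 1) * rexp (-(y * t))))
      ((volume.restrict (Ioi 0)).prod (volume.restrict (Ioi 0))) := by
  have hfm : AEStronglyMeasurable f (volume.restrict (Ioi 0)) := by
    refine (hf.aestronglyMeasurable.mul (g := fun y ↦ y ^ p) (by fun_prop)).congr
      (ae_restrict_of_forall_mem measurableSet_Ioi fun y (hy : 0 < y) ↦ ?_)
    simp only [Pi.mul_apply, mul_assoc, ← rpow_add hy, neg_add_cancel, rpow_zero, mul_one]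
  refine (integrable_prod_iff (hfm.comp_fst.mul (by fun_prop))).2 ⟨?_, ?_⟩
  · refine ae_restrict_of_forall_mem measurableSet_Ioi fun y (hy : 0 < y) ↦ ?_
    have := integrableOn_rpow_mul_exp_neg_mul (by linarith : -1 < p - 1) hy
    simp only [neg_mul] at this
    exact this.const_mul (f y)
  · refine (hf.norm.const_mul (Gamma p)).congr
      (ae_restrict_of_forall_mem measurableSet_Ioi fun y (hy : 0 < y) ↦ ?_)
    have hnorm : ∀ t ∈ Ioi (0 : ℝ), ‖f y * (t ^ (p - 1) * rexp (-(y * t)))‖ =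
        ‖f y‖ * (t ^ (p - 1) * rexp (-(y * t))) := fun t (ht : 0 < t) ↦ by
      rw [norm_mul, norm_of_nonneg (by positivity : 0 ≤ t ^ (p - 1) * rexp (-(y * t)))]
    simp only [Pi.mul_apply]
    rw [setIntegral_congr_fun measurableSet_Ioi hnorm, integral_const_mul,
      integral_rpow_mul_exp_neg_mul_eq_Gamma_mul_rpow_neg hp hy, norm_mul,
      norm_of_nonneg (rpow_nonneg hy.le _), mul_left_comm]

theorem integral_rpow_mul_integral_mul_exp_neg {f : ℝ → ℝ} {p : ℝ} (hp : 0 < p)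
    (hf : IntegrableOn (fun y ↦ f y * y ^ (-p)) (Ioi 0)) :
    ∫ t in Ioi 0, t ^ (p - 1) * ∫ y in Ioi 0, f y * rexp (-(y * t)) =
      Gamma p * ∫ y in Ioi 0, f y * y ^ (-p) :=
  calc ∫ t in Ioi 0, t ^ (p - 1) * ∫ y in Ioi 0, f y * rexp (-(y * t))
      = ∫ t in Ioi 0, ∫ y in Ioi 0, f y * (t ^ (p - 1) * rexp (-(y * t))) := by
        simp only [← integral_const_mul, mul_left_comm]
    _ = ∫ y in Ioi 0, f y * ∫ t in Ioi 0, t ^ (p - 1) * rexp (-(y * t)) := by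
        simp only [← integral_integral_swap (integrable_mul_rpow_mul_exp_neg_prod hp hf),
          integral_const_mul]
    _ = ∫ y in Ioi 0, Gamma p * (f y * y ^ (-p)) :=
        setIntegral_congr_fun measurableSet_Ioi fun y hy ↦ by
          simp only [integral_rpow_mul_exp_neg_mul_eq_Gamma_mul_rpow_neg hp hy, mul_left_comm]
    _ = Gamma p * ∫ y in Ioi 0, f y * y ^ (-p) := integral_const_mul _ _

theorem integral_rpow_mul_inv_one_add {p : ℝ} (hp : 0 < p) (hp' : p < 1) :
    ∫ t in Ioi (0 : ℝ), t ^ (p - 1) * (1 + t)⁻¹ = π / sin (π * p) := by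
  have hlaplace : ∀ t ∈ Ioi (0 : ℝ), ∫ y in Ioi (0 : ℝ), rexp (-y) * rexp (-(y * t)) =
      (1 + t)⁻¹ := fun t (ht : 0 < t) ↦ by
    rw [← integral_exp_neg_mul (by linarith : 0 < 1 + t)]
    congr with y
    rw [← exp_add]
    ring_nf
  have hGamma := GammaIntegral_convergent (s := 1 - p) (by linarith)
  have hGamma' := Gamma_eq_integral (s := 1 - p) (by linarith)
  rw [sub_sub_cancel_left] at hGamma hGamma'
  rw [← Gamma_mul_Gamma_one_sub, hGamma', ← integral_rpow_mul_integral_mul_exp_neg hp hGamma]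
  exact setIntegral_congr_fun measurableSet_Ioi fun t ht ↦ by simp only [hlaplace t ht]

theorem integral_rpow_mul_inv_one_add_sq {p : ℝ} (hp : 0 < p) (hp' : p < 2) :
    ∫ t in Ioi (0 : ℝ), t ^ (p - 1) * (1 + t ^ 2)⁻¹ = π / (2 * sin (π * p / 2)) := by
  have h := integral_comp_rpow_Ioi_of_pos (g := fun u : ℝ ↦ u ^ (p / 2 - 1) * (1 + u)⁻¹)
    (zero_lt_two' ℝ)
  rw [integral_rpow_mul_inv_one_add (by linarith) (by linarith), ← mul_div_assoc] at h
  rw [mul_comm 2, ← div_div, ← h, ← integral_div]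
  refine setIntegral_congr_fun measurableSet_Ioi fun t (ht : 0 < t) ↦ ?_
  have hpow : t * (t ^ (2 : ℝ)) ^ (p / 2 - 1) = t ^ (p - 1) := by
    rw [← rpow_mul ht.le, mul_comm, ← rpow_add_one ht.ne']
    ring_nf
  simp only [smul_eq_mul, ← hpow, rpow_two]
  norm_num
  ring

theorem integral_sin_mul_mul_exp_neg_mul {a : ℝ} (ha : 0 < a) (b : ℝ) :
    ∫ y in Ioi (0 : ℝ), sin (b * y) * rexp (-(y * a)) = b / (a ^ 2 + b ^ 2) := by
  have hre : (-a + b * Complex.I : ℂ).re < 0 := by simpa using ha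
  have him (y : ℝ) : sin (b * y) * rexp (-(y * a)) =
      RCLike.im (Complex.exp ((-a + b * Complex.I) * y)) := by
    rw [RCLike.im_eq_complex_im, Complex.exp_im, mul_comm]
    simp [mul_comm]
  simp only [him]
  rw [integral_im (integrableOn_exp_mul_complex_Ioi hre 0), integral_exp_mul_complex_Ioi hre 0]
  simp [Complex.normSq_apply, ← sq, neg_div]

theorem integrableOn_sin_mul_rpow_neg {p : ℝ} (hp : 1 < p) (hp' : p < 2) :
    IntegrableOn (fun y : ℝ ↦ sin y * y ^ (-p)) (Ioi 0) := by
  have htop : sin =O[atTop] fun y : ℝ ↦ y ^ (-0 : ℝ) :=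
    isBigO_of_le _ fun y ↦ by simpa using abs_sin_le_one y
  have hzero : sin =O[𝓝[>] 0] fun y : ℝ ↦ y ^ (-(-1) : ℝ) :=
    isBigO_of_le _ fun y ↦ by simpa using abs_sin_le_abs
  have := mellin_convergent_of_isBigO_scalar (s := 1 - p)
    (continuous_sin.locallyIntegrable.locallyIntegrableOn _) htop (by linarith) hzero (by linarith)
  simpa only [sub_sub_cancel_left, mul_comm] using this

theorem integral_sin_mul_rpow_neg {p : ℝ} (hp : 1 < p) (hp' : p < 2) :
    ∫ y in Ioi (0 : ℝ), sin y * y ^ (-p) = π / (2 * sin (π * p / 2) * Gamma p) := by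
  have hlaplace : ∀ t ∈ Ioi (0 : ℝ), ∫ y in Ioi (0 : ℝ), sin y * rexp (-(y * t)) =
      (1 + t ^ 2)⁻¹ := fun t ht ↦ by
    simpa [add_comm] using integral_sin_mul_mul_exp_neg_mul ht 1
  have h := integral_rpow_mul_integral_mul_exp_neg (zero_lt_one.trans hp)
    (integrableOn_sin_mul_rpow_neg hp hp')
  rw [setIntegral_congr_fun (g := fun t ↦ t ^ (p - 1) * (1 + t ^ 2)⁻¹) measurableSet_Ioi
    fun t ht ↦ by simp only [hlaplace t ht],
    integral_rpow_mul_inv_one_add_sq (by linarith) hp'] at h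
  rw [← div_div, h, mul_div_cancel_left₀ _ (Gamma_pos_of_pos (by linarith)).ne']

/-! ### Fourier integrals with a power singularity at the origin -/

section FourierIntegral

variable {f f' : ℝ → ℝ} {p s L M : ℝ}

theorem tendsto_integral_sin_mul_rpow_neg_mul_comp_div (hp : 1 < p) (hp' : p < 2)
    (hf : ContinuousOn f (Ioi 0)) (hM : ∀ x, 0 < x → |f x| ≤ M)
    (hL : Tendsto f (𝓝[>] 0) (𝓝 L)) :
    Tendsto (fun s : ℝ ↦ ∫ y in Ioi 0, sin y * y ^ (-p) * f (y / s)) atTop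
      (𝓝 ((∫ y in Ioi 0, sin y * y ^ (-p)) * L)) := by
  rw [← integral_mul_const]
  refine tendsto_integral_filter_of_dominated_convergence (fun y ↦ ‖sin y * y ^ (-p)‖ * M) ?_ ?_
    ((integrableOn_sin_mul_rpow_neg hp hp').norm.mul_const M) ?_
  · filter_upwards [eventually_gt_atTop 0] with s hs
    have hcomp : ContinuousOn (fun y ↦ f (y / s)) (Ioi 0) :=
      hf.comp (by fun_prop) fun y (hy : 0 < y) ↦ div_pos hy hs
    exact AEStronglyMeasurable.mul (by fun_prop) (hcomp.aestronglyMeasurable measurableSet_Ioi)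
  · filter_upwards [eventually_gt_atTop 0] with s hs
    refine ae_restrict_of_forall_mem measurableSet_Ioi fun y (hy : 0 < y) ↦ ?_
    rw [norm_mul]
    exact mul_le_mul_of_nonneg_left (hM _ (div_pos hy hs)) (norm_nonneg _)
  · refine ae_restrict_of_forall_mem measurableSet_Ioi fun y (hy : 0 < y) ↦ ?_
    have hdiv : Tendsto (fun s : ℝ ↦ y / s) atTop (𝓝[>] 0) :=
      tendsto_nhdsWithin_iff.2 ⟨tendsto_const_nhds.div_atTop tendsto_id,
        (eventually_gt_atTop 0).mono fun s hs ↦ div_pos hy hs⟩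
    exact (hL.comp hdiv).const_mul _

theorem rpow_mul_integral_sin_mul_rpow_neg_mul (hs : 0 < s) :
    s ^ (1 - p) * ∫ x in Ioi 0, sin (s * x) * (x ^ (-p) * f x) =
      ∫ y in Ioi 0, sin y * y ^ (-p) * f (y / s) := by
  have hscale := integral_comp_mul_left_Ioi' (fun y ↦ sin y * y ^ (-p) * f (y / s)) 0 hs
  rw [mul_zero, smul_eq_mul] at hscale
  rw [← hscale, sub_eq_add_neg, rpow_add hs, rpow_one, mul_assoc, ← integral_const_mul]
  congr 1
  refine setIntegral_congr_fun measurableSet_Ioi fun x (hx : 0 < x) ↦ ?_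
  simp only [mul_rpow hs.le hx.le, mul_div_cancel_left₀ x hs.ne']
  ring

theorem tendsto_sin_mul_rpow_mul_nhdsGT_zero (hp : p < 2) (hM : ∀ x, 0 < x → |f x| ≤ M) :
    Tendsto (fun x ↦ x ^ (1 - p) * f x * sin (s * x)) (𝓝[>] 0) (𝓝 0) := by
  have hpow : Tendsto (fun x : ℝ ↦ x ^ (2 - p)) (𝓝[>] 0) (𝓝 0) := by
    have := (continuousAt_rpow_const 0 (2 - p) (Or.inr (by linarith))).tendsto
    rw [zero_rpow (by linarith)] at this
    exact this.mono_left nhdsWithin_le_nhds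
  have hbound : Tendsto (fun x ↦ x ^ (2 - p) * (M * |s|)) (𝓝[>] 0) (𝓝 0) := by
    simpa only [zero_mul] using hpow.mul_const (M * |s|)
  refine squeeze_zero_norm' ?_ hbound
  filter_upwards [self_mem_nhdsWithin] with x (hx : 0 < x)
  calc ‖x ^ (1 - p) * f x * sin (s * x)‖ = x ^ (1 - p) * |f x| * |sin (s * x)| := by
        rw [norm_mul, norm_mul, norm_of_nonneg (by positivity : 0 ≤ x ^ (1 - p)), norm_eq_abs,
          norm_eq_abs]
    _ ≤ x ^ (1 - p) * M * (|s| * x) := by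
        have hsin : |sin (s * x)| ≤ |s| * x := by
          simpa only [abs_mul, abs_of_pos hx] using abs_sin_le_abs (x := s * x)
        have hM0 : 0 ≤ M := (abs_nonneg _).trans (hM x hx)
        gcongr
        exact hM x hx
    _ = x ^ (2 - p) * (M * |s|) := by
        rw [show 2 - p = 1 - p + 1 by ring, rpow_add_one hx.ne']
        ring

theorem tendsto_rpow_one_sub_atTop (hp : 1 < p) :
    Tendsto (fun x : ℝ ↦ x ^ (1 - p)) atTop (𝓝 0) := by
  simpa only [neg_sub] using tendsto_rpow_neg_atTop (sub_pos.2 hp)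

theorem tendsto_sin_mul_rpow_mul_atTop (hp : 1 < p) (hM : ∀ x, 0 < x → |f x| ≤ M) :
    Tendsto (fun x ↦ x ^ (1 - p) * f x * sin (s * x)) atTop (𝓝 0) := by
  simp only [mul_assoc]
  refine (tendsto_rpow_one_sub_atTop hp).zero_mul_isBoundedUnder_le
    (isBoundedUnder_of_eventually_le (a := M) ?_)
  filter_upwards [eventually_gt_atTop 0] with x hx
  simp only [Function.comp, norm_mul, norm_eq_abs]
  exact (mul_le_of_le_one_right (abs_nonneg _) (abs_sin_le_one _)).trans (hM x hx)

theorem integrableOn_sin_mul_rpow_neg_mul (hf : IntegrableOn (fun x ↦ x ^ (1 - p) * f x) (Ioi 0)) :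
    IntegrableOn (fun x ↦ sin (s * x) * (x ^ (-p) * f x)) (Ioi 0) := by
  have hsinc : ∀ x, ‖s * sinc (s * x)‖ ≤ |s| := fun x ↦ by
    rw [norm_mul]
    exact mul_le_of_le_one_right (abs_nonneg _) (abs_sinc_le_one _)
  refine (hf.bdd_mul (by fun_prop) (ae_of_all _ hsinc)).congr
    (ae_restrict_of_forall_mem measurableSet_Ioi fun x (hx : 0 < x) ↦ ?_)
  obtain rfl | hs := eq_or_ne s 0
  · simp
  · simp only [sinc_of_ne_zero (mul_ne_zero hs hx.ne'), sub_eq_add_neg, rpow_add hx, rpow_one]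
    field_simp

theorem hasDerivAt_rpow_one_sub_mul {x : ℝ} (hx : 0 < x) (hderiv : HasDerivAt f (f' x) x) :
    HasDerivAt (fun x ↦ x ^ (1 - p) * f x)
      (x ^ (1 - p) * f' x - (p - 1) * (x ^ (-p) * f x)) x := by
  refine ((hasDerivAt_rpow_const (Or.inl hx.ne')).mul hderiv).congr_deriv ?_
  rw [sub_sub_cancel_left]
  ring

theorem mul_integral_cos_mul_rpow_mul (hp : 1 < p) (hp' : p < 2)
    (hderiv : ∀ x, 0 < x → HasDerivAt f (f' x) x) (hM : ∀ x, 0 < x → |f x| ≤ M)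
    (hf : IntegrableOn (fun x ↦ x ^ (1 - p) * f x) (Ioi 0))
    (hf' : IntegrableOn (fun x ↦ x ^ (1 - p) * f' x) (Ioi 0)) :
    s * ∫ x in Ioi 0, cos (s * x) * (x ^ (1 - p) * f x) =
      (p - 1) * (∫ x in Ioi 0, sin (s * x) * (x ^ (-p) * f x)) -
        ∫ x in Ioi 0, sin (s * x) * (x ^ (1 - p) * f' x) := by
  have hsin (x : ℝ) : HasDerivAt (fun x ↦ sin (s * x)) (cos (s * x) * s) x := by
    simpa only [id, mul_one] using ((hasDerivAt_id x).const_mul s).sin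
  have hcosf : IntegrableOn ((fun x ↦ x ^ (1 - p) * f x) * fun x ↦ cos (s * x) * s) (Ioi 0) :=
    hf.mul_bdd (c := |s|) (by fun_prop) (ae_of_all _ fun x ↦ by
      rw [norm_mul]
      exact mul_le_of_le_one_left (abs_nonneg _) (abs_cos_le_one _))
  have hsinf := (integrableOn_sin_mul_rpow_neg_mul (s := s) hf).const_mul (p - 1)
  have hsinf' : IntegrableOn (fun x ↦ sin (s * x) * (x ^ (1 - p) * f' x)) (Ioi 0) :=
    hf'.bdd_mul (by fun_prop) (ae_of_all _ fun x ↦ abs_sin_le_one _)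
  have hparts := integral_Ioi_mul_deriv_eq_deriv_mul (v := fun x ↦ sin (s * x))
    (fun x hx ↦ hasDerivAt_rpow_one_sub_mul (p := p) hx (hderiv x hx)) (fun x _ ↦ hsin x) hcosf
    ((hsinf'.sub hsinf).congr (ae_of_all _ fun x ↦ by simp only [Pi.sub_apply, Pi.mul_apply]; ring))
    (tendsto_sin_mul_rpow_mul_nhdsGT_zero hp' hM) (tendsto_sin_mul_rpow_mul_atTop hp hM)
  calc s * ∫ x in Ioi 0, cos (s * x) * (x ^ (1 - p) * f x)
      = ∫ x in Ioi 0, x ^ (1 - p) * f x * (cos (s * x) * s) := by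
        rw [← integral_const_mul]
        congr with x
        ring
    _ = ∫ x in Ioi 0, ((p - 1) * (sin (s * x) * (x ^ (-p) * f x)) -
          sin (s * x) * (x ^ (1 - p) * f' x)) := by
        rw [hparts, sub_zero, zero_sub, ← integral_neg]
        congr with x
        ring
    _ = _ := by rw [integral_sub hsinf hsinf', integral_const_mul]

theorem tendsto_rpow_mul_integral_cos_mul_rpow_mul (hp : 1 < p) (hp' : p < 2)
    (hderiv : ∀ x, 0 < x → HasDerivAt f (f' x) x) (hM : ∀ x, 0 < x → |f x| ≤ M)
    (hL : Tendsto f (𝓝[>] 0) (𝓝 L)) (hf : IntegrableOn (fun x ↦ x ^ (1 - p) * f x) (Ioi 0))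
    (hf' : IntegrableOn (fun x ↦ x ^ (1 - p) * f' x) (Ioi 0)) :
    Tendsto (fun s : ℝ ↦ s ^ (2 - p) * ∫ x in Ioi 0, cos (s * x) * (x ^ (1 - p) * f x)) atTop
      (𝓝 (π / (2 * sin (π * p / 2) * Gamma (p - 1)) * L)) := by
  have hcont : ContinuousOn f (Ioi 0) := fun x hx ↦ (hderiv x hx).continuousAt.continuousWithinAt
  have hmain := tendsto_integral_sin_mul_rpow_neg_mul_comp_div hp hp' hcont hM hL
  have hrem : Tendsto (fun s : ℝ ↦ s ^ (1 - p) * ∫ x in Ioi 0, sin (s * x) * (x ^ (1 - p) * f' x))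
      atTop (𝓝 0) := by
    refine (tendsto_rpow_one_sub_atTop hp).zero_mul_isBoundedUnder_le
      (isBoundedUnder_of ⟨∫ x in Ioi 0, ‖x ^ (1 - p) * f' x‖, fun s ↦ ?_⟩)
    refine norm_integral_le_of_norm_le hf'.norm (ae_of_all _ fun x ↦ ?_)
    rw [norm_mul]
    exact mul_le_of_le_one_left (norm_nonneg _) (abs_sin_le_one _)
  have hlim := (hmain.const_mul (p - 1)).sub hrem
  have hGamma : Gamma p = (p - 1) * Gamma (p - 1) := by
    simpa using Gamma_add_one (sub_pos.2 hp).ne'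
  have hconst : (p - 1) * ((∫ y in Ioi (0 : ℝ), sin y * y ^ (-p)) * L) - 0 =
      π / (2 * sin (π * p / 2) * Gamma (p - 1)) * L := by
    have : p - 1 ≠ 0 := (sub_pos.2 hp).ne'
    rw [integral_sin_mul_rpow_neg hp hp', hGamma, sub_zero]
    field_simp
  rw [hconst] at hlim
  refine hlim.congr' ?_
  filter_upwards [eventually_gt_atTop 0] with s hs
  rw [show 2 - p = 1 - p + 1 by ring, rpow_add_one hs.ne', mul_assoc,
    mul_integral_cos_mul_rpow_mul hp hp' hderiv hM hf hf',
    ← rpow_mul_integral_sin_mul_rpow_neg_mul hs]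
  ring

end FourierIntegral

section Lorentzian

variable {α p : ℝ}

theorem hasDerivAt_inv_sq_add_sq (hα : α ≠ 0) (x : ℝ) :
    HasDerivAt (fun x ↦ (α ^ 2 + x ^ 2)⁻¹) (-(2 * x) / (α ^ 2 + x ^ 2) ^ 2) x := by
  have h := ((hasDerivAt_pow 2 x).const_add (α ^ 2)).fun_inv (by positivity)
  simpa using h

theorem integrableOn_rpow_mul_inv_sq_add_sq (hα : α ≠ 0) (hp : 0 < p) (hp' : p < 2) :
    IntegrableOn (fun x : ℝ ↦ x ^ (1 - p) * (α ^ 2 + x ^ 2)⁻¹) (Ioi 0) := by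
  have hcont : Continuous fun x : ℝ ↦ (α ^ 2 + x ^ 2)⁻¹ :=
    Continuous.inv₀ (by fun_prop) fun x ↦ by positivity
  have htop : (fun x : ℝ ↦ (α ^ 2 + x ^ 2)⁻¹) =O[atTop] fun x ↦ x ^ (-2 : ℝ) := by
    refine IsBigO.of_norm_eventuallyLE ?_
    filter_upwards [eventually_gt_atTop 0] with x hx
    rw [norm_of_nonneg (by positivity), rpow_neg hx.le, rpow_two]
    exact inv_anti₀ (by positivity) (by linarith [sq_nonneg α])
  have hzero : (fun x : ℝ ↦ (α ^ 2 + x ^ 2)⁻¹) =O[𝓝[>] 0] fun x ↦ x ^ (-0 : ℝ) := by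
    simpa using (hcont.tendsto 0).isBigO_one ℝ |>.mono nhdsWithin_le_nhds
  have := mellin_convergent_of_isBigO_scalar (s := 2 - p)
    (hcont.locallyIntegrable.locallyIntegrableOn _) htop (by linarith) hzero (by linarith)
  rwa [show 2 - p - 1 = 1 - p by ring] at this

theorem integrableOn_rpow_mul_deriv_inv_sq_add_sq (hα : 0 < α) (hp : 0 < p) (hp' : p < 2) :
    IntegrableOn (fun x : ℝ ↦ x ^ (1 - p) * (-(2 * x) / (α ^ 2 + x ^ 2) ^ 2)) (Ioi 0) := by
  refine ((integrableOn_rpow_mul_inv_sq_add_sq hα.ne' hp hp').mul_const α⁻¹).mono' (by fun_prop)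
    (ae_restrict_of_forall_mem measurableSet_Ioi fun x (hx : 0 < x) ↦ ?_)
  have hamgm : 2 * x / (α ^ 2 + x ^ 2) ≤ α⁻¹ := by
    rw [div_le_iff₀ (by positivity), inv_mul_eq_div, le_div_iff₀ hα]
    linarith [sq_nonneg (α - x)]
  calc ‖x ^ (1 - p) * (-(2 * x) / (α ^ 2 + x ^ 2) ^ 2)‖
      = x ^ (1 - p) * (α ^ 2 + x ^ 2)⁻¹ * (2 * x / (α ^ 2 + x ^ 2)) := by
        rw [neg_div, mul_neg, norm_neg, norm_of_nonneg (by positivity)]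
        field_simp
    _ ≤ x ^ (1 - p) * (α ^ 2 + x ^ 2)⁻¹ * α⁻¹ := by gcongr

theorem integral_cos_mul_comp_abs (g : ℝ → ℝ) (s : ℝ) :
    ∫ x, cos (s * x) * g |x| = 2 * ∫ x in Ioi 0, cos (s * x) * g x := by
  rw [← integral_comp_abs (f := fun x ↦ cos (s * x) * g x)]
  congr with x
  rw [← cos_abs (s * x), ← cos_abs (s * |x|), abs_mul, abs_mul, abs_abs]

theorem tendsto_rpow_mul_integral_cos_mul_rpow_div_sq_add_sq (hα : 0 < α) (hp : 1 < p)
    (hp' : p < 2) :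
    Tendsto (fun s : ℝ ↦ s ^ (2 - p) * ∫ x, cos (s * x) * (|x| ^ (1 - p) / (α ^ 2 + x ^ 2))) atTop
      (𝓝 (π / (sin (π * p / 2) * Gamma (p - 1) * α ^ 2))) := by
  have hbound (x : ℝ) : |(α ^ 2 + x ^ 2)⁻¹| ≤ (α ^ 2)⁻¹ := by
    rw [abs_of_nonneg (by positivity)]
    exact inv_anti₀ (by positivity) (by linarith [sq_nonneg x])
  have hzero : Tendsto (fun x : ℝ ↦ (α ^ 2 + x ^ 2)⁻¹) (𝓝[>] 0) (𝓝 (α ^ 2)⁻¹) := by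
    have := (hasDerivAt_inv_sq_add_sq hα.ne' 0).continuousAt.tendsto
    rw [zero_pow two_ne_zero, add_zero] at this
    exact this.mono_left nhdsWithin_le_nhds
  have h := (tendsto_rpow_mul_integral_cos_mul_rpow_mul hp hp'
    (fun x _ ↦ hasDerivAt_inv_sq_add_sq hα.ne' x) (fun x _ ↦ hbound x) hzero
    (integrableOn_rpow_mul_inv_sq_add_sq hα.ne' (by linarith) hp')
    (integrableOn_rpow_mul_deriv_inv_sq_add_sq hα (by linarith) hp')).const_mul 2
  convert h using 2 with s
  · have := integral_cos_mul_comp_abs (fun x ↦ x ^ (1 - p) / (α ^ 2 + x ^ 2)) s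
    simp only [sq_abs] at this
    rw [this, mul_left_comm]
    simp only [div_eq_mul_inv]
  · ring

end Lorentzian

/-! ### Stieltjes transforms and convolutions -/

/-- The Stieltjes transform `v ↦ ∫₀^∞ k(t) (v + t)^(-κ) dt` of order `κ` of a kernel `k`.
It is the inner integral of the cross-covariances, with the sign of the integration variable
reversed. -/
noncomputable def stieltjesTransform (κ : ℝ) (k : ℝ → ℝ) (v : ℝ) : ℝ :=
  ∫ t in Ioi 0, k t * (v + t) ^ (-κ)

section Stieltjes

variable {k : ℝ → ℝ} {κ v t : ℝ}

theorem measurable_stieltjesTransform (hk : Measurable k) :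
    Measurable (stieltjesTransform κ k) := by
  have huncurry : StronglyMeasurable (fun q : ℝ × ℝ ↦ k q.2 * (q.1 + q.2) ^ (-κ)) :=
    Measurable.stronglyMeasurable (by fun_prop)
  exact huncurry.integral_prod_right'.measurable

theorem abs_stieltjesTransform_le (hκ : 0 ≤ κ)
    (hk : IntegrableOn (fun t ↦ |k t| * t ^ (-κ)) (Ioi 0)) (hv : 0 ≤ v) :
    |stieltjesTransform κ k v| ≤ ∫ t in Ioi 0, |k t| * t ^ (-κ) := by
  rw [stieltjesTransform, ← norm_eq_abs]
  refine norm_integral_le_of_norm_le hk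
    (ae_restrict_of_forall_mem measurableSet_Ioi fun t (ht : 0 < t) ↦ ?_)
  rw [norm_mul, norm_of_nonneg (rpow_nonneg (by positivity) _)]
  exact mul_le_mul_of_nonneg_left (rpow_le_rpow_of_nonpos ht (by linarith) (by linarith))
    (norm_nonneg _)

theorem rpow_mul_add_rpow_neg_le_one (hκ : 0 ≤ κ) (hv : 0 ≤ v) (ht : 0 < t) :
    v ^ κ * (v + t) ^ (-κ) ≤ 1 := by
  rw [rpow_neg (by positivity), ← div_eq_mul_inv, div_le_one (by positivity)]
  gcongr
  linarith

theorem norm_mul_rpow_mul_add_rpow_neg_le (hκ : 0 ≤ κ) (hv : 0 ≤ v) (ht : 0 < t) :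
    ‖k t * (v ^ κ * (v + t) ^ (-κ))‖ ≤ ‖k t‖ := by
  rw [norm_mul, norm_of_nonneg (by positivity : 0 ≤ v ^ κ * (v + t) ^ (-κ))]
  exact mul_le_of_le_one_right (norm_nonneg _) (rpow_mul_add_rpow_neg_le_one hκ hv ht)

theorem rpow_mul_stieltjesTransform :
    v ^ κ * stieltjesTransform κ k v = ∫ t in Ioi 0, k t * (v ^ κ * (v + t) ^ (-κ)) := by
  rw [stieltjesTransform, ← integral_const_mul]
  simp only [mul_left_comm]

theorem rpow_mul_abs_stieltjesTransform_le (hκ : 0 ≤ κ) (hk : IntegrableOn k (Ioi 0))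
    (hv : 0 ≤ v) : v ^ κ * |stieltjesTransform κ k v| ≤ ∫ t in Ioi 0, ‖k t‖ := by
  rw [← abs_of_nonneg (rpow_nonneg hv κ), ← abs_mul, rpow_mul_stieltjesTransform]
  exact norm_integral_le_of_norm_le hk.norm (ae_restrict_of_forall_mem measurableSet_Ioi
    fun t ht ↦ norm_mul_rpow_mul_add_rpow_neg_le hκ hv ht)

theorem tendsto_rpow_mul_add_rpow_neg (κ t : ℝ) :
    Tendsto (fun v ↦ v ^ κ * (v + t) ^ (-κ)) atTop (𝓝 1) := by
  have hratio : Tendsto (fun v ↦ (1 + t / v) ^ (-κ)) atTop (𝓝 1) := by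
    have : Tendsto (fun v ↦ 1 + t / v) atTop (𝓝 (1 + 0)) :=
      (tendsto_const_nhds.div_atTop tendsto_id).const_add 1
    rw [add_zero] at this
    simpa only [one_rpow] using this.rpow_const (p := -κ) (Or.inl one_ne_zero)
  refine hratio.congr' ?_
  filter_upwards [eventually_gt_atTop 0, eventually_gt_atTop (-t)] with v hv hvt
  rw [one_add_div hv.ne', div_rpow (by linarith) hv.le, rpow_neg hv.le, div_inv_eq_mul, mul_comm]

theorem tendsto_rpow_mul_stieltjesTransform (hκ : 0 ≤ κ) (hk : IntegrableOn k (Ioi 0)) :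
    Tendsto (fun v ↦ v ^ κ * stieltjesTransform κ k v) atTop (𝓝 (∫ t in Ioi 0, k t)) := by
  simp only [rpow_mul_stieltjesTransform]
  refine tendsto_integral_filter_of_dominated_convergence (‖k ·‖)
    (Eventually.of_forall fun v ↦ hk.aestronglyMeasurable.mul
      (Measurable.aestronglyMeasurable (by fun_prop))) ?_ hk.norm
    (ae_of_all _ fun t ↦ ?_)
  · filter_upwards [eventually_ge_atTop 0] with v hv
    exact ae_restrict_of_forall_mem measurableSet_Ioi fun t ht ↦
      norm_mul_rpow_mul_add_rpow_neg_le hκ hv ht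
  · simpa only [mul_one] using (tendsto_rpow_mul_add_rpow_neg κ t).const_mul (k t)

end Stieltjes

section Convolution

variable {k g : ℝ → ℝ} {κ s w L M K : ℝ}

theorem tendsto_rpow_mul_comp_sub_const (hL : Tendsto (fun v ↦ v ^ κ * g v) atTop (𝓝 L)) (w : ℝ) :
    Tendsto (fun s ↦ s ^ κ * g (s - w)) atTop (𝓝 L) := by
  have hsub : Tendsto (fun s ↦ s - w) atTop atTop := tendsto_atTop_add_const_right _ (-w) tendsto_id
  have hratio := ((tendsto_rpow_mul_add_rpow_neg (-κ) w).comp hsub).mul (hL.comp hsub)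
  rw [one_mul] at hratio
  refine hratio.congr' ?_
  filter_upwards [eventually_gt_atTop w] with s hs
  simp only [Function.comp, sub_add_cancel, neg_neg, rpow_neg (sub_pos.2 hs).le]
  have : (s - w) ^ κ ≠ 0 := (rpow_pos_of_pos (sub_pos.2 hs) κ).ne'
  field_simp

theorem rpow_mul_abs_comp_sub_le (hκ : 0 ≤ κ) (hκ' : κ ≤ 1) (hM : ∀ v, 0 ≤ v → |g v| ≤ M)
    (hK : ∀ v, 0 ≤ v → v ^ κ * |g v| ≤ K) (hw : 0 ≤ w) (hws : w ≤ s) :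
    s ^ κ * |g (s - w)| ≤ K + w ^ κ * M := by
  have hsw : 0 ≤ s - w := sub_nonneg.2 hws
  calc s ^ κ * |g (s - w)| ≤ ((s - w) ^ κ + w ^ κ) * |g (s - w)| := by
        gcongr
        simpa only [sub_add_cancel] using rpow_add_le_add_rpow hsw hw hκ hκ'
    _ = (s - w) ^ κ * |g (s - w)| + w ^ κ * |g (s - w)| := add_mul _ _ _
    _ ≤ K + w ^ κ * M := by
        gcongr
        exacts [hK _ hsw, hM _ hsw]

theorem norm_indicator_mul_rpow_mul_comp_sub_le (hκ : 0 ≤ κ) (hκ' : κ ≤ 1)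
    (hM : ∀ v, 0 ≤ v → |g v| ≤ M) (hK : ∀ v, 0 ≤ v → v ^ κ * |g v| ≤ K) (hw : 0 < w) :
    ‖(Ioc 0 s).indicator (fun w ↦ k w * (s ^ κ * g (s - w))) w‖ ≤
      ‖k w‖ * K + ‖w ^ κ * k w‖ * M := by
  have hM0 : 0 ≤ M := (abs_nonneg _).trans (hM 0 le_rfl)
  have hK0 : 0 ≤ K := (by positivity : (0 : ℝ) ≤ 0 ^ κ * |g 0|).trans (hK 0 le_rfl)
  by_cases hws : w ≤ s
  · have hs : 0 < s := hw.trans_le hws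
    rw [indicator_of_mem (show w ∈ Ioc 0 s from ⟨hw, hws⟩), norm_mul, norm_mul,
      norm_of_nonneg (rpow_nonneg hs.le κ)]
    calc ‖k w‖ * (s ^ κ * |g (s - w)|) ≤ ‖k w‖ * (K + w ^ κ * M) := by
          gcongr
          exact rpow_mul_abs_comp_sub_le hκ hκ' hM hK hw.le hws
      _ = ‖k w‖ * K + ‖w ^ κ * k w‖ * M := by
          rw [norm_mul, norm_of_nonneg (rpow_nonneg hw.le κ)]
          ring
  · rw [indicator_of_notMem fun h ↦ hws h.2, norm_zero]
    positivity

theorem integral_comp_sub_mul_eq_integral_indicator (hs : 0 ≤ s) :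
    ∫ v in (0)..s, k (s - v) * g v =
      ∫ w in Ioi 0, (Ioc 0 s).indicator (fun w ↦ k w * g (s - w)) w := by
  have := intervalIntegral.integral_comp_sub_left (a := 0) (b := s) (fun w ↦ k w * g (s - w)) s
  simp only [sub_sub_cancel, sub_self, sub_zero] at this
  rw [this, intervalIntegral.integral_of_le hs, setIntegral_indicator measurableSet_Ioc,
    inter_eq_right.2 Ioc_subset_Ioi_self]

theorem tendsto_rpow_mul_integral_comp_sub_mul (hκ : 0 ≤ κ) (hκ' : κ ≤ 1)
    (hk : IntegrableOn k (Ioi 0)) (hkκ : IntegrableOn (fun w ↦ w ^ κ * k w) (Ioi 0))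
    (hg : Measurable g) (hM : ∀ v, 0 ≤ v → |g v| ≤ M) (hK : ∀ v, 0 ≤ v → v ^ κ * |g v| ≤ K)
    (hL : Tendsto (fun v ↦ v ^ κ * g v) atTop (𝓝 L)) :
    Tendsto (fun s ↦ s ^ κ * ∫ v in (0)..s, k (s - v) * g v) atTop
      (𝓝 ((∫ w in Ioi 0, k w) * L)) := by
  have hdom : Tendsto (fun s ↦ ∫ w in Ioi 0, (Ioc 0 s).indicator
      (fun w ↦ k w * (s ^ κ * g (s - w))) w) atTop (𝓝 (∫ w in Ioi 0, k w * L)) := by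
    refine tendsto_integral_filter_of_dominated_convergence
      (fun w ↦ ‖k w‖ * K + ‖w ^ κ * k w‖ * M) ?_ ?_
      ((hk.norm.mul_const K).add (hkκ.norm.mul_const M)) ?_
    · exact Eventually.of_forall fun s ↦
        (hk.aestronglyMeasurable.mul
          (Measurable.aestronglyMeasurable (by fun_prop))).indicator measurableSet_Ioc
    · refine Eventually.of_forall fun s ↦ ae_restrict_of_forall_mem measurableSet_Ioi
        fun w (hw : 0 < w) ↦ ?_
      exact norm_indicator_mul_rpow_mul_comp_sub_le hκ hκ' hM hK hw
    · refine ae_restrict_of_forall_mem measurableSet_Ioi fun w (hw : 0 < w) ↦ ?_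
      refine ((tendsto_rpow_mul_comp_sub_const hL w).const_mul (k w)).congr' ?_
      filter_upwards [eventually_ge_atTop w] with s hs
      rw [indicator_of_mem (show w ∈ Ioc 0 s from ⟨hw, hs⟩)]
  rw [integral_mul_const] at hdom
  refine hdom.congr' ?_
  filter_upwards [eventually_ge_atTop 0] with s hs
  rw [integral_comp_sub_mul_eq_integral_indicator hs, ← integral_const_mul]
  simp only [← indicator_const_mul, mul_left_comm]

end Convolution

/-! ### Covariances of fractional Ornstein–Uhlenbeck processes -/

section CrossCovariance

variable {κ α β : ℝ}

theorem integral_exp_mul_rpow_sub_eq_stieltjesTransform (κ α v : ℝ) :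
    ∫ u in Iic (0 : ℝ), rexp (α * u) * (v - u) ^ (-κ) =
      stieltjesTransform κ (fun t ↦ rexp (-α * t)) v := by
  have := integral_comp_neg_Iic 0 fun t ↦ rexp (-α * t) * (v + t) ^ (-κ)
  simpa only [stieltjesTransform, neg_mul_neg, ← sub_eq_add_neg, neg_zero] using this

theorem tendsto_rpow_mul_exp_neg_mul_integral_exp_mul (hκ : 0 ≤ κ) (hκ' : κ < 1) (hα : 0 < α)
    (hβ : 0 < β) :
    Tendsto (fun s ↦ s ^ κ * (rexp (-β * s) * ∫ v in (0)..s, rexp (β * v) *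
      ∫ u in Iic (0 : ℝ), rexp (α * u) * (v - u) ^ (-κ))) atTop (𝓝 (α * β)⁻¹) := by
  have hα_int := integrableOn_exp_mul_Ioi (neg_neg_of_pos hα) 0
  have hα_sing : IntegrableOn (fun t ↦ |rexp (-α * t)| * t ^ (-κ)) (Ioi 0) := by
    simpa only [abs_exp, mul_comm] using integrableOn_rpow_mul_exp_neg_mul (by linarith) hα
  have h := tendsto_rpow_mul_integral_comp_sub_mul hκ hκ'.le
    (integrableOn_exp_mul_Ioi (neg_neg_of_pos hβ) 0)
    (integrableOn_rpow_mul_exp_neg_mul (by linarith) hβ)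
    (measurable_stieltjesTransform (by fun_prop))
    (fun v ↦ abs_stieltjesTransform_le hκ hα_sing)
    (fun v ↦ rpow_mul_abs_stieltjesTransform_le hκ hα_int)
    (tendsto_rpow_mul_stieltjesTransform hκ hα_int)
  rw [integral_exp_neg_mul hα, integral_exp_neg_mul hβ, ← mul_inv_rev] at h
  convert h using 3 with s
  rw [← intervalIntegral.integral_const_mul]
  congr with v
  rw [integral_exp_mul_rpow_sub_eq_stieltjesTransform, ← mul_assoc, ← exp_add]
  ring_nf

end CrossCovariance

section FractionalOrnsteinUhlenbeck

variable {H α β : ℝ}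

/-- The autocovariance at lag `s` of the stationary fractional Ornstein–Uhlenbeck process with
Hurst index `H`, mean reversion `α` and volatility `ν`, in its spectral representation. -/
noncomputable def fouAutocov (H α ν s : ℝ) : ℝ :=
  ν ^ 2 * (Gamma (2 * H + 1) * sin (π * H)) / (2 * π) *
    ∫ x, cos (s * x) * (|x| ^ (1 - 2 * H) / (α ^ 2 + x ^ 2))

/-- The cross-covariance at lag `s` of two fractional Ornstein–Uhlenbeck components with
volatilities `ν` and `μ`. The component observed later reverts to its mean at rate `β`, the other
one at rate `α`; `H` is the sum of the two Hurst indices and `c` is `(ρ - η) / 2` or `(ρ + η) / 2`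
according to which component comes first. The covariance `C` at lag zero is left free. -/
noncomputable def fouCrossCov (H α β ν μ c C s : ℝ) : ℝ :=
  rexp (-β * s) * C + ν * μ * rexp (-β * s) * (H * (H - 1)) * c *
    ∫ v in (0)..s, rexp (β * v) * ∫ u in Iic (0 : ℝ), rexp (α * u) * (v - u) ^ (H - 2)

theorem tendsto_rpow_mul_fouAutocov (hH : H ∈ Ioo (1 / 2) 1) (hα : 0 < α) (ν : ℝ) :
    Tendsto (fun s ↦ s ^ (2 - 2 * H) * fouAutocov H α ν s) atTop
      (𝓝 (ν ^ 2 * H * (2 * H - 1) / α ^ 2)) := by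
  obtain ⟨hH_gt, hH_lt⟩ := hH
  have hGamma_pos : 0 < Gamma (2 * H - 1) := Gamma_pos_of_pos (by linarith)
  have hsin_pos : 0 < sin (π * H) :=
    sin_pos_of_pos_of_lt_pi (by positivity) (mul_lt_of_lt_one_right pi_pos hH_lt)
  have hGamma : Gamma (2 * H + 1) = 2 * H * ((2 * H - 1) * Gamma (2 * H - 1)) := by
    rw [Gamma_add_one (by linarith), ← Gamma_add_one (s := 2 * H - 1) (by linarith), sub_add_cancel]
  have h := (tendsto_rpow_mul_integral_cos_mul_rpow_div_sq_add_sq hα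
    (by linarith : 1 < 2 * H) (by linarith)).const_mul
      (ν ^ 2 * (Gamma (2 * H + 1) * sin (π * H)) / (2 * π))
  convert h using 2 with s
  · rw [fouAutocov, mul_left_comm]
  · rw [hGamma, mul_left_comm π, mul_div_cancel_left₀ _ two_ne_zero]
    generalize Gamma (2 * H - 1) = G, sin (π * H) = σ at hGamma_pos hsin_pos ⊢
    field_simp

theorem tendsto_rpow_mul_fouCrossCov (hH : H ∈ Ioc 1 2) (hα : 0 < α) (hβ : 0 < β)
    (ν μ c C : ℝ) :
    Tendsto (fun s ↦ s ^ (2 - H) * fouCrossCov H α β ν μ c C s) atTop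
      (𝓝 (ν * μ * H * (H - 1) * c / (α * β))) := by
  have hlagzero := (tendsto_rpow_mul_exp_neg_mul_atTop_nhds_zero (2 - H) β hβ).mul_const C
  have hint := (tendsto_rpow_mul_exp_neg_mul_integral_exp_mul (sub_nonneg.2 hH.2)
    (by linarith [hH.1]) hα hβ).const_mul (ν * μ * H * (H - 1) * c)
  convert hlagzero.add hint using 2 with s
  · simp only [fouCrossCov, neg_sub]
    ring
  · rw [zero_mul, zero_add, div_eq_mul_inv]

end FractionalOrnsteinUhlenbeck

theorem stmt19_general {α1 α2 H1 H2 : ℝ} (hα1 : 0 < α1) (hα2 : 0 < α2)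
    (h1 : H1 ∈ Ioo (1 / 2) 1) (h2 : H2 ∈ Ioo (1 / 2) 1) (ν1 ν2 ρ η C : ℝ) :
    Tendsto (fun s ↦ s ^ (4 - 2 * (H1 + H2)) * (fouAutocov H1 α1 ν1 s * fouAutocov H2 α2 ν2 s +
        fouCrossCov (H1 + H2) α1 α2 ν1 ν2 ((ρ - η) / 2) C s *
          fouCrossCov (H1 + H2) α2 α1 ν1 ν2 ((ρ + η) / 2) C s)) atTop
      (𝓝 (ν1 ^ 2 * ν2 ^ 2 / (4 * α1 ^ 2 * α2 ^ 2) *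
        ((H1 + H2) ^ 2 * (H1 + H2 - 1) ^ 2 * (ρ ^ 2 - η ^ 2) +
          4 * H1 * H2 * (2 * H1 - 1) * (2 * H2 - 1)))) := by
  have hH : H1 + H2 ∈ Ioc 1 2 := ⟨by linarith [h1.1, h2.1], by linarith [h1.2, h2.2]⟩
  have hauto := (tendsto_rpow_mul_fouAutocov h1 hα1 ν1).mul (tendsto_rpow_mul_fouAutocov h2 hα2 ν2)
  have hcross := (tendsto_rpow_mul_fouCrossCov hH hα1 hα2 ν1 ν2 ((ρ - η) / 2) C).mul
    (tendsto_rpow_mul_fouCrossCov hH hα2 hα1 ν1 ν2 ((ρ + η) / 2) C)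
  convert (hauto.add hcross).congr' ?_ using 2
  · field_simp
    ring
  · filter_upwards [eventually_gt_atTop 0] with s hs
    have hpow1 : s ^ (2 - 2 * H1) * s ^ (2 - 2 * H2) = s ^ (4 - 2 * (H1 + H2)) := by
      rw [← rpow_add hs]
      ring_nf
    have hpow2 : s ^ (2 - (H1 + H2)) * s ^ (2 - (H1 + H2)) = s ^ (4 - 2 * (H1 + H2)) := by
      rw [← rpow_add hs]
      ring_nf
    rw [mul_mul_mul_comm, hpow1, mul_mul_mul_comm, hpow2, ← mul_add]

/-- Identification of the constant `ℓ` in the critical case `H = H₁ + H₂ = 3/2`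
(proof of Theorem 3.9):
`s (r₁₁(s) r₂₂(s) + r₁₂(s) r₂₁(s)) → (ν₁²ν₂²/(4α₁²α₂²)) (9/16 (ρ²-η²) + 4H₁H₂(2H₁-1)(2H₂-1))`. -/
theorem stmt19
    (α1 α2 ν1 ν2 H1 H2 ρ η : ℝ)
    (hα1 : 0 < α1) (hα2 : 0 < α2) (hν1 : 0 < ν1) (hν2 : 0 < ν2)
    (h1 : H1 ∈ Set.Ioo (1/2 : ℝ) 1) (h2 : H2 ∈ Set.Ioo (1/2 : ℝ) 1)
    (hH : H1 + H2 = 3 / 2)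
    (C0 : ℝ)
    (hC0 : C0 = Real.Gamma (H1 + H2 + 1) * ν1 * ν2 / (2 * (α1 + α2)) *
      ((α1 ^ (1 - (H1 + H2)) + α2 ^ (1 - (H1 + H2))) * ρ +
        (α2 ^ (1 - (H1 + H2)) - α1 ^ (1 - (H1 + H2))) * η))
    (I12 I21 : ℝ → ℝ)
    (hI12 : ∀ s, I12 s =
      ∫ v in (0:ℝ)..s, Real.exp (α2 * v) *
        ∫ u in Set.Iic (0:ℝ), Real.exp (α1 * u) * (v - u) ^ (H1 + H2 - 2))
    (hI21 : ∀ s, I21 s =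
      ∫ v in (0:ℝ)..s, Real.exp (α1 * v) *
        ∫ u in Set.Iic (0:ℝ), Real.exp (α2 * u) * (v - u) ^ (H1 + H2 - 2))
    (r12 r21 : ℝ → ℝ)
    (hr12 : ∀ s, r12 s = Real.exp (-α2 * s) * C0 +
      ν1 * ν2 * Real.exp (-α2 * s) * ((H1 + H2) * (H1 + H2 - 1)) * ((ρ - η) / 2) * I12 s)
    (hr21 : ∀ s, r21 s = Real.exp (-α1 * s) * C0 +
      ν1 * ν2 * Real.exp (-α1 * s) * ((H1 + H2) * (H1 + H2 - 1)) * ((ρ + η) / 2) * I21 s)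
    (r11 r22 : ℝ → ℝ)
    (hr11 : ∀ s, r11 s = ν1 ^ 2 * (Real.Gamma (2 * H1 + 1) * Real.sin (π * H1)) / (2 * π) *
      ∫ x : ℝ, Real.cos (s * x) * (|x| ^ (1 - 2 * H1) / (α1 ^ 2 + x ^ 2)))
    (hr22 : ∀ s, r22 s = ν2 ^ 2 * (Real.Gamma (2 * H2 + 1) * Real.sin (π * H2)) / (2 * π) *
      ∫ x : ℝ, Real.cos (s * x) * (|x| ^ (1 - 2 * H2) / (α2 ^ 2 + x ^ 2))) :
    Tendsto (fun s : ℝ => s * (r11 s * r22 s + r12 s * r21 s)) atTop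
      (𝓝 (ν1 ^ 2 * ν2 ^ 2 / (4 * α1 ^ 2 * α2 ^ 2) *
        (9 / 16 * (ρ ^ 2 - η ^ 2) + 4 * H1 * H2 * (2 * H1 - 1) * (2 * H2 - 1)))) := by
  have hpow (s : ℝ) : s ^ (4 - 2 * (H1 + H2)) = s := by norm_num [hH]
  have hconst : (H1 + H2) ^ 2 * (H1 + H2 - 1) ^ 2 = 9 / 16 := by norm_num [hH]
  simpa only [fouAutocov, fouCrossCov, ← hr11, ← hr22, ← hI12, ← hI21, ← hr12, ← hr21, hpow,
    hconst] using stmt19_general hα1 hα2 h1 h2 ν1 ν2 ρ η C0
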